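/- If G is a frog graph (a cycle C with two paths attached at two antipodal vertices of C), then μ(G) = 3. -/

import Mathlib

open SimpleGraph

/-- Two vertices `u v ∈ X` are `X`-visible in `G`: there is a shortest `u,v`-path
whose only vertices in `X` are `u` and `v`. -/
def VisiblePair {V : Type*} (G : SimpleGraph V) (X : Set V) (u v : V) : Prop :=
  ∃ p : G.Walk u v, p.IsPath ∧ p.length = G.dist u v ∧
    ∀ w ∈ p.support, w ∈ X → w = u ∨ w = v

/-- `X` is a mutual-visibility set of `G`. -/
def IsMVSet {V : Type*} (G : SimpleGraph V) (X : Set V) : Prop :=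
  ∀ u ∈ X, ∀ v ∈ X, u ≠ v → VisiblePair G X u v

/-- `X` is an independent set of `G`. -/
def IsIndep {V : Type*} (G : SimpleGraph V) (X : Set V) : Prop :=
  ∀ u ∈ X, ∀ v ∈ X, ¬ G.Adj u v

/-- The mutual-visibility number `μ(G)`. -/
noncomputable def mu {V : Type*} (G : SimpleGraph V) : ℕ :=
  sSup {n | ∃ X : Set V, IsMVSet G X ∧ X.ncard = n}

/-- The independent mutual-visibility number `μᵢ(G)`. -/
noncomputable def muI {V : Type*} (G : SimpleGraph V) : ℕ :=
  sSup {n | ∃ X : Set V, IsMVSet G X ∧ IsIndep G X ∧ X.ncard = n}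

/-- The independence number `α(G)`. -/
noncomputable def indepNumber {V : Type*} (G : SimpleGraph V) : ℕ :=
  sSup {n | ∃ X : Set V, IsIndep G X ∧ X.ncard = n}

/-- The frog graph built from a cycle on `n ≥ 3` vertices with tails of `a` and `b`
extra vertices attached at the antipodal cycle vertices `0` and `⌊n/2⌋`. -/
def frogGraph (n a b : ℕ) : SimpleGraph (Fin n ⊕ (Fin a ⊕ Fin b)) :=
  SimpleGraph.fromRel (fun x y =>
    match x, y with
    | Sum.inl i, Sum.inl j => (j : ℕ) = ((i : ℕ) + 1) % n
    | Sum.inl i, Sum.inr (Sum.inl k) => (i : ℕ) = 0 ∧ (k : ℕ) = 0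
    | Sum.inl i, Sum.inr (Sum.inr k) => (i : ℕ) = n / 2 ∧ (k : ℕ) = 0
    | Sum.inr (Sum.inl k), Sum.inr (Sum.inl l) => (l : ℕ) = (k : ℕ) + 1
    | Sum.inr (Sum.inr k), Sum.inr (Sum.inr l) => (l : ℕ) = (k : ℕ) + 1
    | _, _ => False)

/-- `G` is a frog graph: a cycle with two (possibly trivial) paths attached at
two antipodal vertices of the cycle. -/
def IsFrog {V : Type*} (G : SimpleGraph V) : Prop :=
  ∃ (n a b : ℕ), 3 ≤ n ∧ Nonempty (G ≃g frogGraph n a b)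

/-!
Write `v₀` and `v₁` for the two antipodal attaching vertices of the cycle.

A vertex of a tail cuts off what lies beyond it, so at most one vertex of a mutual-visibility set
`X` of size at least three hangs at each cycle vertex. Suppose `x₀, x₁, x₂, x₃ ∈ X` appear in this
cyclic order. If `x₁` and `x₃` lie on the cycle, together they separate `x₀` from `x₂`; likewise for
`x₀` and `x₂`. Otherwise both tails contain a vertex of `X`, and the remaining two vertices lie on
the same arc between `v₀` and `v₁`. As `v₁` is a cycle vertex farthest from the tail at `v₀`, no
geodesic from that tail to another cycle vertex passes through `v₁`, so of the two vertices on the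
arc the one closer to `v₁` is hidden by the other one.

For the lower bound, `v₀`, `v₁` and a neighbour of `v₀` are mutually visible.
-/

section MutualVisibility

variable {V W : Type*} {G : SimpleGraph V} {H : SimpleGraph W} {X S C : Set V} {u v w : V}

theorem exists_walk_of_descent {f : V → ℕ}
    (hf : ∀ x ∈ S, x ≠ v → ∃ y ∈ S, G.Adj x y ∧ f y < f x) (hu : u ∈ S) :
    ∃ p : G.Walk u v, p.length ≤ f u ∧ ∀ w ∈ p.support, w ∈ S := by
  induction hk : f u using Nat.strong_induction_on generalizing u with
  | _ k ih =>
    subst hk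
    by_cases huv : u = v
    · subst huv
      exact ⟨Walk.nil, Nat.zero_le _, by simpa using hu⟩
    · obtain ⟨y, hyS, huy, hlt⟩ := hf u hu huv
      obtain ⟨p, hp, hpS⟩ := ih (f y) hlt hyS rfl
      exact ⟨Walk.cons huy p, by rw [Walk.length_cons]; omega, by simpa using ⟨hu, hpS⟩⟩

theorem le_add_length_of_adj {f : V → ℕ} (hf : ∀ x y, G.Adj x y → f x ≤ f y + 1)
    (p : G.Walk u v) : f u ≤ f v + p.length := by
  induction p with
  | nil => simp
  | cons h p ih =>
    have := hf _ _ h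
    rw [Walk.length_cons]
    omega

theorem dist_eq_of_potential {f : V → ℕ} (hv : f v = 0)
    (hdesc : ∀ x, x ≠ v → ∃ y, G.Adj x y ∧ f y < f x)
    (hadj : ∀ x y, G.Adj x y → f x ≤ f y + 1) (u : V) : G.dist u v = f u := by
  obtain ⟨p, hp, -⟩ := exists_walk_of_descent (G := G) (S := Set.univ) (v := v) (f := f)
    (by simpa using hdesc) (Set.mem_univ u)
  obtain ⟨q, hq⟩ := p.reachable.exists_walk_length_eq_dist
  have hlower := le_add_length_of_adj hadj q
  have hupper := dist_le p
  omega

theorem notMem_support_of_dist_le (p : G.Walk u v) (hp : p.length = G.dist u v) (hwv : w ≠ v)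
    (h : G.dist u v ≤ G.dist u w) : w ∉ p.support := by
  classical
  intro hw
  have hlt := p.length_takeUntil_lt_length hw hwv
  have hle := dist_le (p.takeUntil w hw)
  omega

theorem exists_mem_support_of_boundary (hC : ∀ x ∈ S, ∀ y ∉ S, G.Adj x y → y ∈ C)
    (p : G.Walk u v) (hu : u ∈ S) (hv : v ∉ S) : ∃ w ∈ p.support, w ∈ C ∧ w ∉ S := by
  obtain ⟨d, hd, hfst, hsnd⟩ := p.exists_boundary_dart S hu hv
  exact ⟨d.snd, p.dart_snd_mem_support_of_mem_darts hd, hC _ hfst _ hsnd d.adj, hsnd⟩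

theorem dist_hom_le (f : G →g H) (h : G.Reachable u v) : H.dist (f u) (f v) ≤ G.dist u v := by
  obtain ⟨p, hp⟩ := h.exists_walk_length_eq_dist
  simpa [hp] using dist_le (p.map f)

namespace VisiblePair

theorem of_length_eq_dist (p : G.Walk u v) (hp : p.length = G.dist u v)
    (hX : ∀ w ∈ p.support, w ∈ X → w = u ∨ w = v) : VisiblePair G X u v :=
  ⟨p, p.isPath_of_length_eq_dist hp, hp, hX⟩

theorem of_adj (h : G.Adj u v) : VisiblePair G X u v :=
  of_length_eq_dist h.toWalk (by simp [dist_eq_one_iff_adj.2 h]) fun w hw _ => by simpa using hw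

theorem symm (h : VisiblePair G X u v) : VisiblePair G X v u := by
  obtain ⟨p, -, hp, hX⟩ := h
  refine of_length_eq_dist p.reverse (by rw [Walk.length_reverse, hp, dist_comm]) fun w hw hwX => ?_
  rw [Walk.support_reverse, List.mem_reverse] at hw
  exact (hX w hw hwX).symm

theorem map (h : VisiblePair G X u v) (e : G ≃g H) : VisiblePair H (e '' X) (e u) (e v) := by
  obtain ⟨p, -, hp, hX⟩ := h
  have hdist : G.dist u v ≤ H.dist (e u) (e v) := by
    simpa using dist_hom_le e.symm.toHom (p.map e.toHom).reachable
  refine of_length_eq_dist (p.map e.toHom) (le_antisymm ?_ (dist_le _)) ?_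
  · rwa [Walk.length_map, hp]
  · rw [Walk.support_map]
    rintro _ hw ⟨x, hx, rfl⟩
    exact (hX x ((List.mem_map_of_injective e.injective).1 hw) hx).imp (congrArg e) (congrArg e)

theorem mem_of_boundary (h : VisiblePair G X u v) (hC : ∀ x ∈ S, ∀ y ∉ S, G.Adj x y → y ∈ C)
    (hCX : C ⊆ X) (hu : u ∈ S) (hv : v ∉ S) : v ∈ C := by
  obtain ⟨p, -, -, hX⟩ := h
  obtain ⟨w, hwp, hwC, hwS⟩ := exists_mem_support_of_boundary hC p hu hv
  obtain rfl | rfl := hX w hwp (hCX hwC)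
  · exact absurd hu hwS
  · exact hwC

end VisiblePair

theorem IsMVSet.image (hX : IsMVSet G X) (e : G ≃g H) : IsMVSet H (e '' X) := by
  rintro _ ⟨u, hu, rfl⟩ _ ⟨v, hv, rfl⟩ huv
  exact (hX u hu v hv (ne_of_apply_ne e huv)).map e

theorem isMVSet_triple (huv : VisiblePair G {u, v, w} u v) (hvw : VisiblePair G {u, v, w} v w)
    (huw : VisiblePair G {u, v, w} u w) : IsMVSet G {u, v, w} := by
  rintro x (rfl | rfl | rfl) y (rfl | rfl | rfl) hxy
  exacts [absurd rfl hxy, huv, huw, huv.symm, absurd rfl hxy, hvw, huw.symm, hvw.symm,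
    absurd rfl hxy]

theorem exists_isMVSet_ncard_of_iso {k : ℕ} (e : G ≃g H) (h : ∃ X, IsMVSet G X ∧ X.ncard = k) :
    ∃ Y, IsMVSet H Y ∧ Y.ncard = k := by
  obtain ⟨X, hX, rfl⟩ := h
  exact ⟨e '' X, hX.image e, Set.ncard_image_of_injective X e.injective⟩

theorem mu_congr (e : G ≃g H) : mu G = mu H :=
  congrArg sSup <| Set.ext fun _ =>
    ⟨exists_isMVSet_ncard_of_iso e, exists_isMVSet_ncard_of_iso e.symm⟩

end MutualVisibility

theorem exists_strictMono_comp_of_injOn {α β : Type*} [LinearOrder β] {f : α → β} {X : Set α}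
    (hX : X.Finite) (hf : Set.InjOn f X) {k : ℕ} (hk : k ≤ X.ncard) :
    ∃ x : Fin k → α, (∀ i, x i ∈ X) ∧ StrictMono (f ∘ x) := by
  have hcard : k ≤ (hX.toFinset.image f).card := by
    rwa [Finset.card_image_of_injOn (by simpa using hf), ← Set.ncard_eq_toFinset_card X hX]
  have hmem : ∀ i, ∃ x ∈ X, f x = Finset.orderEmbOfCardLe _ hcard i := fun i => by
    simpa using Finset.orderEmbOfCardLe_mem _ hcard i
  choose x hxX hx using hmem
  exact ⟨x, hxX, fun i j hij => by simpa [hx] using hij⟩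

theorem eq_add_one_mod_iff {n i j : ℕ} (hi : i < n) (hj : j < n) :
    j = (i + 1) % n ↔ j = i + 1 ∨ j = 0 ∧ i + 1 = n := by
  rcases (Nat.succ_le_of_lt hi).lt_or_eq with h | h
  · rw [Nat.mod_eq_of_lt h]; omega
  · rw [← Nat.succ_eq_add_one, h, Nat.mod_self]; omega

namespace frogGraph

variable {n a b : ℕ} {X : Set (Fin n ⊕ (Fin a ⊕ Fin b))} {u v w x y : Fin n ⊕ (Fin a ⊕ Fin b)}

/-- The index of the cycle vertex at which a vertex hangs: its own index for a cycle vertex, and the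
index of the attaching vertex for a vertex of a tail. -/
def pos : Fin n ⊕ (Fin a ⊕ Fin b) → ℕ
  | Sum.inl i => i
  | Sum.inr (Sum.inl _) => 0
  | Sum.inr (Sum.inr _) => n / 2

/-- The distance of a vertex to the cycle. Together with `pos` it coordinatizes the frog graph. -/
def height : Fin n ⊕ (Fin a ⊕ Fin b) → ℕ
  | Sum.inl _ => 0
  | Sum.inr (Sum.inl k) => k + 1
  | Sum.inr (Sum.inr k) => k + 1

/-- The distance between the indices `p, q < n` along a cycle of length `n`. -/
def cycleDist (n p q : ℕ) : ℕ :=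
  min (p.dist q) (n - p.dist q)

@[simp]
theorem pos_inl (i : Fin n) : pos (Sum.inl i : Fin n ⊕ (Fin a ⊕ Fin b)) = i :=
  rfl

@[simp]
theorem height_inl (i : Fin n) : height (Sum.inl i : Fin n ⊕ (Fin a ⊕ Fin b)) = 0 :=
  rfl

theorem pos_lt (hn : 3 ≤ n) (x : Fin n ⊕ (Fin a ⊕ Fin b)) : pos x < n := by
  rcases x with i | k | k <;> simp only [pos] <;> omega

theorem ext_pos_height (hn : 3 ≤ n) (hp : pos x = pos y) (hh : height x = height y) : x = y := by
  rcases x with i | k | k <;> rcases y with j | l | l <;> simp only [pos, height] at hp hh <;>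
    first
      | omega
      | (simp only [Sum.inl.injEq, Sum.inr.injEq, Fin.ext_iff]; omega)

theorem exists_eq_inl_of_pos_ne (h₀ : pos x ≠ 0) (h₁ : pos x ≠ n / 2) : ∃ i, x = Sum.inl i := by
  rcases x with i | k | k
  exacts [⟨i, rfl⟩, absurd rfl h₀, absurd rfl h₁]

theorem exists_pos_eq_height_add_one_eq (hn : 3 ≤ n) (h : height x ≠ 0) :
    ∃ y : Fin n ⊕ (Fin a ⊕ Fin b), pos y = pos x ∧ height y + 1 = height x := by
  rcases x with i | ⟨_ | k, hk⟩ | ⟨_ | k, hk⟩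
  · exact absurd rfl h
  · exact ⟨Sum.inl ⟨0, by omega⟩, rfl, rfl⟩
  · exact ⟨Sum.inr (Sum.inl ⟨k, by omega⟩), rfl, rfl⟩
  · exact ⟨Sum.inl ⟨n / 2, by omega⟩, rfl, rfl⟩
  · exact ⟨Sum.inr (Sum.inr ⟨k, by omega⟩), rfl, rfl⟩

theorem adj_iff (hn : 3 ≤ n) : (frogGraph n a b).Adj x y ↔
    height x = 0 ∧ height y = 0 ∧ cycleDist n (pos x) (pos y) = 1 ∨
      pos x = pos y ∧ (height x).dist (height y) = 1 := by
  rcases x with i | k | k <;> rcases y with j | l | l <;>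
    simp only [frogGraph, fromRel_adj, pos, height, cycleDist, Nat.dist, ne_eq, Sum.inl.injEq,
      Sum.inr.injEq, Fin.ext_iff, eq_add_one_mod_iff, Fin.is_lt, reduceCtorEq, not_false_eq_true,
      true_and, false_and, or_false, false_or, false_iff] <;>
    omega

theorem cycleDist_triangle {p q r : ℕ} (hp : p < n) (hq : q < n) (hr : r < n) :
    cycleDist n p r ≤ cycleDist n p q + cycleDist n q r := by
  simp only [cycleDist, Nat.dist]
  omega

theorem exists_cycleDist_eq_one {p q : ℕ} (hp : p < n) (hq : q < n) (hpq : p ≠ q) :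
    ∃ r < n, cycleDist n p r = 1 ∧ cycleDist n r q < cycleDist n p q := by
  simp only [cycleDist, Nat.dist]
  by_cases hsucc : p < q ∧ q - p ≤ n / 2 ∨ q < p ∧ n / 2 < p - q
  · by_cases hp' : p + 1 = n
    · exact ⟨0, by omega⟩
    · exact ⟨p + 1, by omega⟩
  · by_cases hp' : p = 0
    · exact ⟨n - 1, by omega⟩
    · exact ⟨p - 1, by omega⟩

theorem dist_inl (hn : 3 ≤ n) (x : Fin n ⊕ (Fin a ⊕ Fin b)) (i : Fin n) :
    (frogGraph n a b).dist x (Sum.inl i) = height x + cycleDist n (pos x) i := by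
  refine dist_eq_of_potential (f := fun x => height x + cycleDist n (pos x) i)
    (by simp [cycleDist]) (fun x hxi => ?_) (fun x y hxy => ?_) x
  · by_cases hx : height x = 0
    · have hne : pos x ≠ i := fun h => hxi (ext_pos_height hn h hx)
      obtain ⟨r, hr, hadj, hlt⟩ := exists_cycleDist_eq_one (pos_lt hn x) i.isLt hne
      exact ⟨Sum.inl ⟨r, hr⟩, (adj_iff hn).2 (Or.inl ⟨hx, rfl, hadj⟩),
        by simpa only [hx, height_inl, pos_inl, zero_add] using hlt⟩
    · obtain ⟨y, hpos, hheight⟩ := exists_pos_eq_height_add_one_eq hn hx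
      refine ⟨y, (adj_iff hn).2 (Or.inr ⟨hpos.symm, ?_⟩), ?_⟩
      · simp only [Nat.dist]; omega
      · simp only [hpos]; omega
  · rcases (adj_iff hn).1 hxy with ⟨hx, hy, hdist⟩ | ⟨hpos, hheight⟩
    · have := cycleDist_triangle (pos_lt hn x) (pos_lt hn y) i.isLt
      omega
    · simp only [Nat.dist] at hheight
      simp only [hpos]
      omega

theorem antipode_notMem_support (hn : 3 ≤ n) {m k : Fin n} (hm : (m : ℕ) = n / 2) (hmk : m ≠ k)
    (hx : pos x = 0) (p : (frogGraph n a b).Walk x (Sum.inl k))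
    (hp : p.length = (frogGraph n a b).dist x (Sum.inl k)) : Sum.inl m ∉ p.support := by
  refine notMem_support_of_dist_le p hp (Sum.inl_injective.ne hmk) ?_
  rw [dist_inl hn, dist_inl hn, hx, hm]
  simp only [cycleDist, Nat.dist]
  omega

theorem exists_walk_arc (hn : 3 ≤ n) {i j : Fin n} (hij : i ≤ j) :
    ∃ p : (frogGraph n a b).Walk (Sum.inl i) (Sum.inl j), p.length ≤ j - i ∧
      ∀ w ∈ p.support, w ∈ Sum.inl '' Set.Icc i j := by
  refine exists_walk_of_descent (f := fun w => j - pos w) ?_ ⟨i, ⟨le_rfl, hij⟩, rfl⟩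
  rintro _ ⟨k, ⟨hik, hkj⟩, rfl⟩ hne
  have hlt : (k : ℕ) < j := lt_of_le_of_ne hkj fun h => hne (congrArg Sum.inl (Fin.ext h))
  refine ⟨Sum.inl ⟨k + 1, by omega⟩, ⟨_, ⟨hik.trans (Nat.le_succ k), hlt⟩, rfl⟩,
    (adj_iff hn).2 (Or.inl ⟨rfl, rfl, ?_⟩), ?_⟩
  · simp only [pos_inl, cycleDist, Nat.dist]; omega
  · simp only [pos_inl]; omega

theorem visiblePair_of_arc (hn : 3 ≤ n) {i j : Fin n} (hij : i ≤ j) (h : (j : ℕ) - i ≤ n / 2)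
    (hX : ∀ k, Sum.inl k ∈ X → k ∉ Set.Ioo i j) :
    VisiblePair (frogGraph n a b) X (Sum.inl i) (Sum.inl j) := by
  obtain ⟨p, hp, hpX⟩ := exists_walk_arc (a := a) (b := b) hn hij
  refine VisiblePair.of_length_eq_dist p (le_antisymm ?_ (dist_le p)) fun w hw hwX => ?_
  · rw [dist_inl hn]
    simp only [pos_inl, height_inl, cycleDist, Nat.dist]
    omega
  · obtain ⟨k, hk, rfl⟩ := hpX w hw
    by_contra! hne
    refine hX k hwX ⟨lt_of_le_of_ne hk.1 ?_, lt_of_le_of_ne hk.2 ?_⟩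
    · rintro rfl; exact hne.1 rfl
    · rintro rfl; exact hne.2 rfl

theorem exists_isMVSet_ncard_eq_three (n a b : ℕ) (hn : 3 ≤ n) :
    ∃ X, IsMVSet (frogGraph n a b) X ∧ X.ncard = 3 := by
  let i : Fin n := ⟨0, by omega⟩
  let j : Fin n := ⟨n / 2, by omega⟩
  let k : Fin n := ⟨n - 1, by omega⟩
  have hij : i < j := Fin.mk_lt_mk.2 (by omega)
  have hjk : j < k := Fin.mk_lt_mk.2 (by omega)
  have hik : (frogGraph n a b).Adj (Sum.inl i) (Sum.inl k) := by
    refine (adj_iff hn).2 (Or.inl ⟨rfl, rfl, ?_⟩)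
    simp only [pos_inl, cycleDist, Nat.dist, i, k]
    omega
  refine ⟨{Sum.inl i, Sum.inl j, Sum.inl k}, isMVSet_triple ?_ ?_ (.of_adj hik), ?_⟩
  · refine visiblePair_of_arc hn hij.le (by simp only [i, j]; omega) ?_
    simp only [Set.mem_insert_iff, Set.mem_singleton_iff, Sum.inl.injEq, Set.mem_Ioo]
    rintro l (h | h | h) ⟨hil, hlj⟩ <;> order
  · refine visiblePair_of_arc hn hjk.le (by simp only [j, k]; omega) ?_
    simp only [Set.mem_insert_iff, Set.mem_singleton_iff, Sum.inl.injEq, Set.mem_Ioo]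
    rintro l (h | h | h) ⟨hjl, hlk⟩ <;> order
  · exact Set.ncard_eq_three.2 ⟨_, _, _, Sum.inl_injective.ne hij.ne,
      Sum.inl_injective.ne (hij.trans hjk).ne, Sum.inl_injective.ne hjk.ne, rfl⟩

/-- The strict partial order on the vertices with `Above w x` if `x` lies on a tail and `w` lies on
the path from `x` to the cycle, so that `w` cuts off `x` from the rest of the graph. -/
def Above (w x : Fin n ⊕ (Fin a ⊕ Fin b)) : Prop :=
  pos x = pos w ∧ height w < height x

theorem eq_of_adj_of_above (hn : 3 ≤ n) (hx : Above w x) (hy : ¬Above w y)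
    (hxy : (frogGraph n a b).Adj x y) : y = w := by
  simp only [Above] at hx hy
  rw [adj_iff hn] at hxy
  simp only [Nat.dist] at hxy
  exact ext_pos_height hn (by omega) (by omega)

theorem eq_inl_or_eq_inl_of_adj (hn : 3 ≤ n) {i j : Fin n} (hx : pos x ∈ Set.uIoo (i : ℕ) j)
    (hy : pos y ∉ Set.uIoo (i : ℕ) j) (hxy : (frogGraph n a b).Adj x y) :
    y = Sum.inl i ∨ y = Sum.inl j := by
  simp only [Set.uIoo, Set.mem_Ioo] at hx hy
  have := pos_lt hn y
  obtain ⟨hpos, hheight⟩ : (pos y = i ∨ pos y = j) ∧ height y = 0 := by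
    rcases (adj_iff hn).1 hxy with ⟨-, hy, hdist⟩ | ⟨hpos, -⟩
    · simp only [cycleDist, Nat.dist] at hdist
      exact ⟨by omega, hy⟩
    · omega
  exact hpos.imp (ext_pos_height hn · hheight) (ext_pos_height hn · hheight)

theorem above_of_isMVSet (hn : 3 ≤ n) (hX : IsMVSet (frogGraph n a b) X) (hu : u ∈ X) (hv : v ∈ X)
    (hw : w ∈ X) (hwu : Above w u) (hvw : v ≠ w) : Above w v := by
  by_contra hwv
  have huv : u ≠ v := by rintro rfl; exact hwv hwu
  exact hvw ((hX u hu v hv huv).mem_of_boundary (S := {x | Above w x}) (C := {w})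
    (fun x hx y hy => eq_of_adj_of_above hn hx hy) (by simpa using hw) hwu hwv)

theorem not_above_of_isMVSet (hn : 3 ≤ n) (hX : IsMVSet (frogGraph n a b) X) (hc : 3 ≤ X.ncard)
    (hu : u ∈ X) (hv : v ∈ X) : ¬Above u v := by
  intro huv
  have hne : u ≠ v := by rintro rfl; exact huv.2.false
  obtain ⟨w, hw, hwuv⟩ := Set.exists_mem_notMem_of_ncard_lt_ncard
    ((Set.ncard_pair hne).trans_lt (Nat.lt_of_succ_le hc))
  simp only [Set.mem_insert_iff, Set.mem_singleton_iff, not_or] at hwuv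
  have huw : Above u w := above_of_isMVSet hn hX hv hw hu huv hwuv.1
  have hpos : pos v = pos w := huv.1.trans huw.1.symm
  rcases lt_trichotomy (height v) (height w) with hlt | heq | hgt
  · have hvu : Above v u := above_of_isMVSet hn hX hw hu hv ⟨hpos.symm, hlt⟩ hne
    exact hvu.2.asymm huv.2
  · exact hwuv.2 (ext_pos_height hn hpos heq).symm
  · have hwu : Above w u := above_of_isMVSet hn hX hv hu hw ⟨hpos, hgt⟩ (Ne.symm hwuv.1)
    exact hwu.2.asymm huw.2

theorem injOn_pos (hn : 3 ≤ n) (hX : IsMVSet (frogGraph n a b) X) (hc : 3 ≤ X.ncard) :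
    Set.InjOn pos X := by
  intro u hu v hv hp
  have huv : ¬height u < height v := fun h => not_above_of_isMVSet hn hX hc hu hv ⟨hp.symm, h⟩
  have hvu : ¬height v < height u := fun h => not_above_of_isMVSet hn hX hc hv hu ⟨hp, h⟩
  exact ext_pos_height hn hp (by omega)

theorem eq_inl_or_eq_inl_of_isMVSet (hn : 3 ≤ n) (hX : IsMVSet (frogGraph n a b) X) {i j : Fin n}
    (hi : Sum.inl i ∈ X) (hj : Sum.inl j ∈ X) (hu : u ∈ X) (hv : v ∈ X)
    (huij : pos u ∈ Set.uIoo (i : ℕ) j) (hvij : pos v ∉ Set.uIoo (i : ℕ) j) :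
    v = Sum.inl i ∨ v = Sum.inl j := by
  have huv : u ≠ v := by rintro rfl; exact hvij huij
  exact (hX u hu v hv huv).mem_of_boundary (S := pos ⁻¹' Set.uIoo (i : ℕ) j)
    (fun x hx y hy => eq_inl_or_eq_inl_of_adj hn hx hy) (Set.pair_subset hi hj) huij hvij

theorem not_visiblePair_of_mem_uIoo_half (hn : 3 ≤ n) {i k : Fin n} (hu : pos u = 0)
    (hi : Sum.inl i ∈ X) (hi₀ : (i : ℕ) ≠ 0) (hk : (k : ℕ) ∈ Set.uIoo (i : ℕ) (n / 2)) :
    ¬VisiblePair (frogGraph n a b) X u (Sum.inl k) := by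
  rintro ⟨p, -, hp, hX⟩
  obtain ⟨m, hm⟩ : ∃ m : Fin n, (m : ℕ) = n / 2 := ⟨⟨n / 2, by omega⟩, rfl⟩
  rw [← hm] at hk
  have hmk : m ≠ k := by rintro rfl; exact Set.right_notMem_uIoo hk
  have hki : k ≠ i := by rintro rfl; exact Set.left_notMem_uIoo hk
  have hu' : pos u ∉ Set.uIoo (i : ℕ) m := by
    simp only [hu, Set.uIoo, Set.mem_Ioo]; omega
  obtain ⟨w, hw, rfl | rfl, -⟩ := exists_mem_support_of_boundary
    (C := {Sum.inl i, Sum.inl m}) (fun x hx y hy => eq_inl_or_eq_inl_of_adj hn hx hy)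
    p.reverse hk hu'
  all_goals rw [Walk.support_reverse, List.mem_reverse] at hw
  · rcases hX _ hw hi with rfl | h
    · exact hi₀ hu
    · exact hki (Sum.inl_injective h).symm
  · exact antipode_notMem_support hn hm hmk hu p hp hw

theorem pos_eq_zero_or_half_of_interlace (hn : 3 ≤ n) (hX : IsMVSet (frogGraph n a b) X)
    (hx : x ∈ X) (hy : y ∈ X) (hu : u ∈ X) (hv : v ∈ X) (hxu : pos x < pos u) (huy : pos u < pos y)
    (hvxy : pos v < pos x ∨ pos y < pos v) :
    pos x = 0 ∨ pos x = n / 2 ∨ pos y = 0 ∨ pos y = n / 2 := by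
  by_contra! h
  obtain ⟨i, rfl⟩ := exists_eq_inl_of_pos_ne h.1 h.2.1
  obtain ⟨j, rfl⟩ := exists_eq_inl_of_pos_ne h.2.2.1 h.2.2.2
  have hv' : pos v ∉ Set.uIoo (i : ℕ) j := by
    simp only [pos_inl] at hxu huy hvxy
    simp only [Set.uIoo, Set.mem_Ioo]
    omega
  rcases eq_inl_or_eq_inl_of_isMVSet hn hX hx hy hu hv (Set.mem_uIoo_of_lt hxu huy) hv' with
    rfl | rfl <;> omega

theorem not_pos_lt_lt_lt (hn : 3 ≤ n) (hX : IsMVSet (frogGraph n a b) X)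
    {x₀ x₁ x₂ x₃ : Fin n ⊕ (Fin a ⊕ Fin b)} (h₀ : x₀ ∈ X) (h₁ : x₁ ∈ X) (h₂ : x₂ ∈ X) (h₃ : x₃ ∈ X)
    (h₀₁ : pos x₀ < pos x₁) (h₁₂ : pos x₁ < pos x₂) : ¬pos x₂ < pos x₃ := by
  intro h₂₃
  have hodd := pos_eq_zero_or_half_of_interlace hn hX h₁ h₃ h₂ h₀ h₁₂ h₂₃ (.inl h₀₁)
  have heven := pos_eq_zero_or_half_of_interlace hn hX h₀ h₂ h₁ h₃ h₀₁ h₁₂ (.inr h₂₃)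
  have hx₀ : pos x₀ = 0 := by omega
  have hne : x₀ ≠ x₂ := by rintro rfl; omega
  obtain ⟨k, rfl⟩ := exists_eq_inl_of_pos_ne (x := x₂) (by omega) (by omega)
  by_cases hx₁ : pos x₁ = n / 2
  · obtain ⟨i, rfl⟩ := exists_eq_inl_of_pos_ne (x := x₃) (by omega) (by omega)
    exact not_visiblePair_of_mem_uIoo_half hn hx₀ h₃ (Nat.ne_zero_of_lt h₂₃)
      (Set.mem_uIoo_of_gt (hx₁ ▸ h₁₂) h₂₃) (hX _ h₀ _ h₂ hne)
  · obtain ⟨i, rfl⟩ := exists_eq_inl_of_pos_ne (x := x₁) (by omega) (by omega)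
    have hx₃ : pos x₃ = n / 2 := by omega
    exact not_visiblePair_of_mem_uIoo_half hn hx₀ h₁ (Nat.ne_zero_of_lt h₀₁)
      (Set.mem_uIoo_of_lt h₁₂ (hx₃ ▸ h₂₃)) (hX _ h₀ _ h₂ hne)

theorem ncard_le_three (hn : 3 ≤ n) (hX : IsMVSet (frogGraph n a b) X) : X.ncard ≤ 3 := by
  by_contra! hc
  obtain ⟨x, hxX, hx⟩ := exists_strictMono_comp_of_injOn X.toFinite (injOn_pos hn hX hc.le) hc
  exact not_pos_lt_lt_lt hn hX (hxX 0) (hxX 1) (hxX 2) (hxX 3) (hx (by decide)) (hx (by decide))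
    (hx (by decide))

theorem mu_eq_three (n a b : ℕ) (hn : 3 ≤ n) : mu (frogGraph n a b) = 3 := by
  refine IsGreatest.csSup_eq ⟨exists_isMVSet_ncard_eq_three n a b hn, ?_⟩
  rintro _ ⟨X, hX, rfl⟩
  exact ncard_le_three hn hX

end frogGraph

theorem stmt16 {V : Type*} [Fintype V] (G : SimpleGraph V) (h : IsFrog G) :
    mu G = 3 := by
  obtain ⟨n, a, b, hn, ⟨e⟩⟩ := h
  rw [mu_congr e, frogGraph.mu_eq_three n a b hn]
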